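/- Let (u₁, v₁) and (u₂, v₂) be H-continuous pairs on Ω. If there exists a dense subset D of Ω such that u₁(x) = u₂(x) and v₁(x) = v₂(x) for all x ∈ D, then u₁(x) = u₂(x) and v₁(x) = v₂(x) for all x ∈ Ω. -/

import Mathlib

open Set

/-- Points of `ℝⁿ`. -/
abbrev Pt (n : ℕ) := EuclideanSpace ℝ (Fin n)

/-- Lower Baire operator `I(D,Ω,f)(x) = sup_{δ>0} inf { f y : y ∈ B_δ(x) ∩ D }`,
where `B_δ(x) = { y ∈ Ω : ‖y - x‖ < δ }`. -/
noncomputable def Ilow {n : ℕ} (D Om : Set (Pt n)) (f : Pt n → ℝ) (x : Pt n) : ℝ :=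
  sSup {a : ℝ | ∃ δ : ℝ, 0 < δ ∧
    a = sInf (f '' {y | y ∈ Om ∧ ‖y - x‖ < δ ∧ y ∈ D})}

/-- Upper Baire operator `S(D,Ω,f)(x) = inf_{δ>0} sup { f y : y ∈ B_δ(x) ∩ D }`. -/
noncomputable def Shigh {n : ℕ} (D Om : Set (Pt n)) (f : Pt n → ℝ) (x : Pt n) : ℝ :=
  sInf {a : ℝ | ∃ δ : ℝ, 0 < δ ∧
    a = sSup (f '' {y | y ∈ Om ∧ ‖y - x‖ < δ ∧ y ∈ D})}

/-- `f`, defined on `D ⊆ Ω`, is locally bounded relative to `Ω`. -/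
def LocBddOn {n : ℕ} (Om D : Set (Pt n)) (f : Pt n → ℝ) : Prop :=
  ∀ x ∈ Om, ∃ δ : ℝ, 0 < δ ∧ ∃ M : ℝ,
    ∀ y, y ∈ Om → ‖y - x‖ < δ → y ∈ D → |f y| < M

/-- `(u, v)` encodes an interval-valued function `x ↦ [u x, v x]` on `Om`. -/
def IntervalPair {n : ℕ} (Om : Set (Pt n)) (u v : Pt n → ℝ) : Prop :=
  LocBddOn Om Om u ∧ LocBddOn Om Om v ∧ ∀ x ∈ Om, u x ≤ v x

/-- The pair `(u, v)` is S-continuous on `Om`: `I(u) = u` and `S(v) = v`. -/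
def SCont {n : ℕ} (Om : Set (Pt n)) (u v : Pt n → ℝ) : Prop :=
  ∀ x ∈ Om, Ilow Om Om u x = u x ∧ Shigh Om Om v x = v x

/-- The pair `(u, v)` is Hausdorff continuous on `Om`. -/
def HCont {n : ℕ} (Om : Set (Pt n)) (u v : Pt n → ℝ) : Prop :=
  ∀ p q : Pt n → ℝ, LocBddOn Om Om p → LocBddOn Om Om q →
    (∀ x ∈ Om, u x ≤ p x ∧ p x ≤ q x ∧ q x ≤ v x) →
    ∀ x ∈ Om, Ilow Om Om p x = u x ∧ Shigh Om Om q x = v x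

/-- `(u, v)` is an H-continuous interval pair on `Om`. -/
def HContPair {n : ℕ} (Om : Set (Pt n)) (u v : Pt n → ℝ) : Prop :=
  IntervalPair Om u v ∧ HCont Om u v

/-- Lower endpoint of the pointwise interval product. -/
noncomputable def imin {n : ℕ} (u₁ v₁ u₂ v₂ : Pt n → ℝ) (x : Pt n) : ℝ :=
  min (min (u₁ x * u₂ x) (u₁ x * v₂ x)) (min (v₁ x * u₂ x) (v₁ x * v₂ x))

/-- Upper endpoint of the pointwise interval product. -/
noncomputable def imax {n : ℕ} (u₁ v₁ u₂ v₂ : Pt n → ℝ) (x : Pt n) : ℝ :=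
  max (max (u₁ x * u₂ x) (u₁ x * v₂ x)) (max (v₁ x * u₂ x) (v₁ x * v₂ x))

/-- `(pl, pu)` is the H-continuous pair contained pointwise in the interval sum of
`(u₁, v₁)` and `(u₂, v₂)`, i.e. `(pl, pu) = (u₁,v₁) ⊕ (u₂,v₂)`. -/
def IsOplus {n : ℕ} (Om : Set (Pt n)) (u₁ v₁ u₂ v₂ pl pu : Pt n → ℝ) : Prop :=
  HContPair Om pl pu ∧
    ∀ x ∈ Om, u₁ x + u₂ x ≤ pl x ∧ pl x ≤ pu x ∧ pu x ≤ v₁ x + v₂ x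

/-- `(ql, qu)` is the H-continuous pair contained pointwise in the interval product of
`(u₁, v₁)` and `(u₂, v₂)`, i.e. `(ql, qu) = (u₁,v₁) ⊗ (u₂,v₂)`. -/
def IsOtimes {n : ℕ} (Om : Set (Pt n)) (u₁ v₁ u₂ v₂ ql qu : Pt n → ℝ) : Prop :=
  HContPair Om ql qu ∧
    ∀ x ∈ Om, imin u₁ v₁ u₂ v₂ x ≤ ql x ∧ ql x ≤ qu x ∧ qu x ≤ imax u₁ v₁ u₂ v₂ x

theorem aux_bddBelow {n : ℕ} (Om : Set (Pt n)) (u : Pt n → ℝ)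
    (h : ∀ x ∈ Om, Ilow Om Om u x = u x) (x : Pt n) (δ : ℝ) :
    BddBelow (u '' {y | y ∈ Om ∧ ‖y - x‖ < δ ∧ y ∈ Om}) := by
  by_contra hb
  have key : ∀ z ∈ Om, 0 ≤ u z := by
    intro z hz
    have hub : ¬ BddBelow (u '' {y | y ∈ Om ∧ ‖y - z‖ < max 1 (δ + ‖x - z‖) ∧ y ∈ Om}) := by
      intro hb'
      apply hb
      refine hb'.mono (image_mono ?_)
      rintro y ⟨h1, h2, h3⟩
      refine ⟨h1, lt_of_lt_of_le ?_ (le_max_right _ _), h3⟩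
      have := norm_sub_le_norm_sub_add_norm_sub y x z
      linarith
    rw [← h z hz]
    refine le_csSup ?_ ⟨max 1 (δ + ‖x - z‖), by positivity, (Real.sInf_of_not_bddBelow hub).symm⟩
    refine ⟨max 0 (u z), ?_⟩
    rintro a ⟨ε, hε, rfl⟩
    by_cases hbb : BddBelow (u '' {y | y ∈ Om ∧ ‖y - z‖ < ε ∧ y ∈ Om})
    · exact (csInf_le hbb ⟨z, ⟨hz, by simpa using hε, hz⟩, rfl⟩).trans (le_max_right _ _)
    · rw [Real.sInf_of_not_bddBelow hbb]; exact le_max_left _ _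
  apply hb
  refine ⟨0, ?_⟩
  rintro _ ⟨y, hy, rfl⟩
  exact key y hy.1

theorem aux_lsc {n : ℕ} (Om : Set (Pt n)) (u : Pt n → ℝ)
    (h : ∀ x ∈ Om, Ilow Om Om u x = u x) (x : Pt n) (hx : x ∈ Om) (c : ℝ) (hc : c < u x) :
    ∃ δ : ℝ, 0 < δ ∧ ∀ y ∈ Om, ‖y - x‖ < δ → c < u y := by
  rw [← h x hx] at hc
  obtain ⟨a, ⟨δ, hδ, rfl⟩, hlt⟩ := exists_lt_of_lt_csSup (by exact ⟨_, 1, one_pos, rfl⟩) hc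
  exact ⟨δ, hδ, fun y hy hyd =>
    hlt.trans_le (csInf_le (aux_bddBelow Om u h x δ) ⟨y, ⟨hy, hyd, hy⟩, rfl⟩)⟩

theorem aux_neg {n : ℕ} (D Om : Set (Pt n)) (f : Pt n → ℝ) (x : Pt n) :
    Ilow D Om (fun y => - f y) x = - Shigh D Om f x := by
  have e : ∀ s : Set (Pt n), sInf ((fun y => - f y) '' s) = - sSup (f '' s) := by
    intro s
    rw [Real.sInf_def]
    congr 2
    ext a
    simp [neg_eq_iff_eq_neg]
  unfold Ilow Shigh
  simp only [e]
  rw [Real.sInf_def, neg_neg]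
  congr 1
  ext a
  simp [neg_eq_iff_eq_neg]

theorem aux_le {n : ℕ} (Om D : Set (Pt n)) (u₁ v₁ u₂ v₂ : Pt n → ℝ)
    (h₁ : HContPair Om u₁ v₁) (h₂ : HContPair Om u₂ v₂)
    (hD : D ⊆ Om) (hdense : Om ⊆ closure D)
    (heq : ∀ x ∈ D, u₁ x = u₂ x) : ∀ x ∈ Om, u₁ x ≤ v₂ x := by
  obtain ⟨⟨a1, b1, c1⟩, H1⟩ := h₁
  obtain ⟨⟨a2, b2, c2⟩, H2⟩ := h₂
  have l1 : ∀ x ∈ Om, Ilow Om Om u₁ x = u₁ x := fun x hx =>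
    (H1 u₁ v₁ a1 b1 (fun y hy => ⟨le_rfl, c1 y hy, le_rfl⟩) x hx).1
  have l2 : ∀ x ∈ Om, Ilow Om Om (fun y => - v₂ y) x = - v₂ x := fun x hx => by
    rw [aux_neg, (H2 u₂ v₂ a2 b2 (fun y hy => ⟨le_rfl, c2 y hy, le_rfl⟩) x hx).2]
  intro x hx
  by_contra! hlt
  obtain ⟨c, hc1, hc2⟩ := exists_between hlt
  obtain ⟨δ, hδ, k1⟩ := aux_lsc Om u₁ l1 x hx c hc2
  obtain ⟨ε, hε, k2⟩ := aux_lsc Om _ l2 x hx (-c) (by simpa using hc1)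
  obtain ⟨d, hd, hdist⟩ := Metric.mem_closure_iff.1 (hdense hx) (min δ ε) (lt_min hδ hε)
  rw [dist_comm, dist_eq_norm] at hdist
  have m1 := k1 d (hD hd) (hdist.trans_le (min_le_left _ _))
  have m2 := k2 d (hD hd) (hdist.trans_le (min_le_right _ _))
  have m3 := c2 d (hD hd)
  rw [heq d hd] at m1
  linarith

theorem aux_comb {n : ℕ} (Om : Set (Pt n)) (f g w : Pt n → ℝ)
    (hf : LocBddOn Om Om f) (hg : LocBddOn Om Om g) (hw : ∀ x, w x = f x ∨ w x = g x) :
    LocBddOn Om Om w := by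
  intro x hx
  obtain ⟨δ, hδ, M, hM⟩ := hf x hx
  obtain ⟨ε, hε, N, hN⟩ := hg x hx
  refine ⟨min δ ε, lt_min hδ hε, max M N, fun y hy hd _ => ?_⟩
  rcases hw y with h | h <;> rw [h]
  · exact (hM y hy (hd.trans_le (min_le_left _ _)) hy).trans_le (le_max_left _ _)
  · exact (hN y hy (hd.trans_le (min_le_right _ _)) hy).trans_le (le_max_right _ _)

theorem stmt1 {n : ℕ} (Om D : Set (Pt n)) (u₁ v₁ u₂ v₂ : Pt n → ℝ)
    (h₁ : HContPair Om u₁ v₁) (h₂ : HContPair Om u₂ v₂)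
    (hD : D ⊆ Om) (hdense : Om ⊆ closure D)
    (heq : ∀ x ∈ D, u₁ x = u₂ x ∧ v₁ x = v₂ x) :
    ∀ x ∈ Om, u₁ x = u₂ x ∧ v₁ x = v₂ x := by
  have A := aux_le Om D u₁ v₁ u₂ v₂ h₁ h₂ hD hdense (fun x hx => (heq x hx).1)
  have B := aux_le Om D u₂ v₂ u₁ v₁ h₂ h₁ hD hdense (fun x hx => (heq x hx).1.symm)
  obtain ⟨⟨a1, b1, c1⟩, H1⟩ := h₁
  obtain ⟨⟨a2, b2, c2⟩, H2⟩ := h₂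
  have P := aux_comb Om u₁ u₂ (fun x => max (u₁ x) (u₂ x)) a1 a2 (fun x => max_choice _ _)
  have Q := aux_comb Om v₁ v₂ (fun x => min (v₁ x) (v₂ x)) b1 b2 (fun x => min_choice _ _)
  have M : ∀ x ∈ Om, max (u₁ x) (u₂ x) ≤ min (v₁ x) (v₂ x) := fun x hx =>
    max_le (le_min (c1 x hx) (A x hx)) (le_min (B x hx) (c2 x hx))
  intro x hx
  have r1 := H1 _ _ P Q (fun y hy => ⟨le_max_left _ _, M y hy, min_le_left _ _⟩) x hx
  have r2 := H2 _ _ P Q (fun y hy => ⟨le_max_right _ _, M y hy, min_le_right _ _⟩) x hx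
  exact ⟨r1.1.symm.trans r2.1, r1.2.symm.trans r2.2⟩
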